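/- Let ω = (ω₀,ω₁,ω₂): S² → S⁴ be a nonconstant, smooth, S¹-equivariant harmonic sphere which is not linearly full. Then exactly one of the following holds: (i) ω₂ ≡ 0 and there exists μ₁ ∈ ℂ∖{0} such that ω(σ₂⁻¹(z)) = ± ω_eq^{(1)}(σ₂⁻¹(μ₁ z)) for all z ∈ ℂ; or (ii) ω₁ ≡ 0 and there exists μ₂ ∈ ℂ∖{0} such that ω(σ₂⁻¹(z)) = ± ω_eq^{(2)}(σ₂⁻¹(μ₂ z²)) for all z ∈ ℂ. In both cases the sign is + if ω(0,0,−1) = (−1,0,0) and − if ω(0,0,−1) = (1,0,0). -/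

import Mathlib

noncomputable section

open MeasureTheory
open scoped Classical

abbrev E3 : Type := EuclideanSpace ℝ (Fin 3)

abbrev V5 : Type := ℝ × ℂ × ℂ

/-- Squared Euclidean norm on ℝ ⊕ ℂ ⊕ ℂ. -/
def nsq (p : V5) : ℝ := p.1 ^ 2 + Complex.normSq p.2.1 + Complex.normSq p.2.2

/-- Real inner product on ℝ ⊕ ℂ ⊕ ℂ. -/
def vdot (p q : V5) : ℝ :=
  p.1 * q.1 + (p.2.1 * (starRingEnd ℂ) q.2.1).re + (p.2.2 * (starRingEnd ℂ) q.2.2).re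

/-- The circle action R_α · (t, ζ₁, ζ₂) = (t, e^{iα}ζ₁, e^{2iα}ζ₂) on ℝ ⊕ ℂ ⊕ ℂ. -/
def circAct (α : ℝ) (p : V5) : V5 :=
  (p.1, Complex.exp (Complex.I * (α : ℂ)) * p.2.1,
    Complex.exp (2 * Complex.I * (α : ℂ)) * p.2.2)

/-- Rotation of ℝ³ by angle α about the x₃-axis. -/
def rot3 (α : ℝ) (x : E3) : E3 :=
  EuclideanSpace.single (0 : Fin 3) (Real.cos α * x 0 - Real.sin α * x 1) +
    EuclideanSpace.single (1 : Fin 3) (Real.sin α * x 0 + Real.cos α * x 1) +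
    EuclideanSpace.single (2 : Fin 3) (x 2)

/-- The unit sphere S² ⊂ ℝ³. -/
def sphere2 : Set E3 := Metric.sphere (0 : E3) 1

def northPole : E3 := EuclideanSpace.single (2 : Fin 3) (1 : ℝ)

def southPole : E3 := EuclideanSpace.single (2 : Fin 3) (-1 : ℝ)

/-- Degree-zero homogeneous extension of a map defined on the sphere. -/
def homExt (ω : E3 → V5) : E3 → V5 := fun x => ω (‖x‖⁻¹ • x)

def homExtR (g : E3 → ℝ) : E3 → ℝ := fun x => g (‖x‖⁻¹ • x)

/-- Squared Euclidean norm of the differential. -/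
def gradSq (f : E3 → V5) (x : E3) : ℝ :=
  ∑ i : Fin 3, nsq (fderiv ℝ f x (EuclideanSpace.single i (1 : ℝ)))

def gradSqR (f : E3 → ℝ) (x : E3) : ℝ :=
  ∑ i : Fin 3, fderiv ℝ f x (EuclideanSpace.single i (1 : ℝ)) ^ 2

/-- Componentwise Euclidean Laplacian. -/
def lap (f : E3 → V5) (x : E3) : V5 :=
  ∑ i : Fin 3,
    fderiv ℝ (fun y => fderiv ℝ f y (EuclideanSpace.single i (1 : ℝ))) x
      (EuclideanSpace.single i (1 : ℝ))

/-- ω : S² → S⁴ is a (smooth) harmonic sphere: it maps the sphere into the unit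
sphere of ℝ ⊕ ℂ ⊕ ℂ, its degree-zero homogeneous extension Q is smooth away from
the origin, and ΔQ + |∇Q|²Q = 0 on ℝ³ ∖ {0}. -/
def IsHarmonicSphere (ω : E3 → V5) : Prop :=
  (∀ x ∈ sphere2, nsq (ω x) = 1) ∧
    ContDiffOn ℝ (⊤ : ℕ∞) (homExt ω) {(0 : E3)}ᶜ ∧
    ∀ x : E3, x ≠ 0 → lap (homExt ω) x + gradSq (homExt ω) x • homExt ω x = 0

/-- S¹-equivariance of a sphere map. -/
def EquivariantS (ω : E3 → V5) : Prop :=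
  ∀ α : ℝ, ∀ x ∈ sphere2, ω (rot3 α x) = circAct α (ω x)

/-- S¹-equivariance of a vector field on ℝ³. -/
def EquivariantV (X : E3 → V5) : Prop :=
  ∀ (α : ℝ) (x : E3), X (rot3 α x) = circAct α (X x)

/-- Tangential part X_T = X - (w·X)w. -/
def tangPart (w X : E3 → V5) : E3 → V5 := fun x => X x - vdot (w x) (X x) • w x

/-- Second variation δ²E₀(w)[X] = ∫ (|∇X_T|² - |∇w|²|X_T|²). -/
def secondVar (w X : E3 → V5) : ℝ :=
  ∫ x : E3, (gradSq (tangPart w X) x - gradSq w x * nsq (tangPart w X x))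

/-- Stability of a tangent map within the S¹-equivariant class. -/
def IsStable (w : E3 → V5) : Prop :=
  ∀ X : E3 → V5, ContDiff ℝ (⊤ : ℕ∞) X → HasCompactSupport X → EquivariantV X →
    0 ≤ secondVar w X

def conj' (z : ℂ) : ℂ := (starRingEnd ℂ) z

/-- The twistor fibration, in homogeneous coordinates on ℂ⁴ ∖ {0}. -/
def tau4 (w0 w1 w2 w3 : ℂ) : V5 :=
  ((Complex.normSq w0 + Complex.normSq w3 - Complex.normSq w1 - Complex.normSq w2) /
      (Complex.normSq w0 + Complex.normSq w1 + Complex.normSq w2 + Complex.normSq w3),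
    2 * (conj' w0 * w1 + conj' w2 * w3) /
      ((Complex.normSq w0 + Complex.normSq w1 + Complex.normSq w2 + Complex.normSq w3 : ℝ) : ℂ),
    2 * (conj' w0 * w2 - conj' w1 * w3) /
      ((Complex.normSq w0 + Complex.normSq w1 + Complex.normSq w2 + Complex.normSq w3 : ℝ) : ℂ))

/-- Inverse stereographic projection ℂ → S² (from the south pole). -/
def stInv (z : ℂ) : E3 :=
  EuclideanSpace.single (0 : Fin 3) (2 * z.re / (1 + Complex.normSq z)) +
    EuclideanSpace.single (1 : Fin 3) (2 * z.im / (1 + Complex.normSq z)) +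
    EuclideanSpace.single (2 : Fin 3) ((1 - Complex.normSq z) / (1 + Complex.normSq z))

/-- Equatorial embedding ω_eq^{(1)}(x) = (x₃, x₁ + ix₂, 0). -/
def omegaEq1 (x : E3) : V5 := (x 2, (x 0 : ℂ) + (x 1 : ℂ) * Complex.I, 0)

/-- Equatorial embedding ω_eq^{(2)}(x) = (x₃, 0, x₁ + ix₂). -/
def omegaEq2 (x : E3) : V5 := (x 2, 0, (x 0 : ℂ) + (x 1 : ℂ) * Complex.I)

/-- The horizontal algebraic curve composed with the twistor fibration. -/
def liftCurve (μ1 μ2 z0 z1 : ℂ) : V5 :=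
  tau4 (z0 ^ 3) (μ1 * z0 ^ 2 * z1) (μ2 * z0 * z1 ^ 2) (-(μ1 * μ2 / 3) * z1 ^ 3)

/-- The explicit two-parameter family ω_{μ₁,μ₂} of equivariant harmonic spheres,
as a map defined on S² via the identification [z₀, z₁] ↦ σ₂⁻¹(z₁/z₀). -/
def omegaFam (μ1 μ2 : ℂ) (x : E3) : V5 :=
  if x = southPole then
    if μ1 = 0 ∧ μ2 = 0 then ((1 : ℝ), 0, 0)
    else if μ1 ≠ 0 ∧ μ2 ≠ 0 then liftCurve μ1 μ2 0 1
    else ((-1 : ℝ), 0, 0)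
  else liftCurve μ1 μ2 ((1 + x 2 : ℝ) : ℂ) ((x 0 : ℂ) + (x 1 : ℂ) * Complex.I)

/-- Wirtinger derivative ∂f/∂z̄ = ½(∂_{x₁} + i ∂_{x₂})f. -/
def wd (f : ℂ → ℂ) (z : ℂ) : ℂ :=
  (1 / 2 : ℂ) * (fderiv ℝ f z 1 + Complex.I * fderiv ℝ f z Complex.I)

/-- Surface (2-dimensional Hausdorff) measure on ℝ³. -/
def surf : Measure E3 := Measure.hausdorffMeasure 2

/-!
Radially project the cylinder of radius one around the `x₃`-axis to the sphere. In the cylinder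
coordinates `(t, α)`, where `exp (t + iα)` is the stereographic coordinate, the Laplacian and the
energy density of a degree-zero homogeneous map are `∂_t² + ∂_α²` and `|∂_t|² + |∂_α|²`. For an
equivariant map `∂_α` is the generator of the circle action, so harmonicity becomes an ordinary
differential equation in `t` along a single meridian.

The poles are fixed by all rotations, hence are mapped to `(±1, 0, 0)`. Averaging over the circle
separates the weights `0, 1, 2`, so that a map with both complex components nonzero would be
linearly full. Thus only one weight `k` survives, and the meridian is a pair `(h, ζ)` with
`h² + |ζ|² = 1`. Its Hopf differential, with real part `h'² + |ζ'|² - k²|ζ|²` and imaginary part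
`Im (ζ̄ ζ')`, is constant and vanishes at the north pole. This turns the second-order equation into
`h' = -ε k |ζ|²`, `ζ' = ε k h ζ` with a sign `ε`; the stereographic coordinate
`w = ε ζ / (1 + ε h)` then satisfies `w' = k w`, so `w = μ exp (k t)`.
-/

/-! ### The sphere and its stereographic coordinate -/

/-- The horizontal coordinate `x₁ + i x₂` in the identification `ℝ³ ≅ ℂ × ℝ`. -/
def planar (x : E3) : ℂ := (x 0 : ℂ) + (x 1 : ℂ) * Complex.I

lemma planar_re (x : E3) : (planar x).re = x 0 := by simp [planar]

lemma planar_im (x : E3) : (planar x).im = x 1 := by simp [planar]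

lemma E3_ext_planar {x y : E3} (hplanar : planar x = planar y) (hheight : x 2 = y 2) :
    x = y := by
  ext i
  fin_cases i
  · exact (planar_re x).symm.trans ((congrArg Complex.re hplanar).trans (planar_re y))
  · exact (planar_im x).symm.trans ((congrArg Complex.im hplanar).trans (planar_im y))
  · exact hheight

lemma continuous_planar : Continuous planar := by
  unfold planar
  fun_prop

lemma exists_planar_eq (z : ℂ) (s : ℝ) : ∃ x : E3, planar x = z ∧ x 2 = s :=
  ⟨!₂[z.re, z.im, s], Complex.re_add_im z, rfl⟩

lemma planar_smul (c : ℝ) (x : E3) : planar (c • x) = c * planar x := by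
  simp only [planar, PiLp.smul_apply, smul_eq_mul, Complex.ofReal_mul]
  ring

lemma norm_sq_eq_planar (x : E3) : ‖x‖ ^ 2 = ‖planar x‖ ^ 2 + x 2 ^ 2 := by
  rw [EuclideanSpace.norm_sq_eq, Fin.sum_univ_three, ← Complex.normSq_eq_norm_sq,
    Complex.normSq_apply, planar_re, planar_im]
  simp only [Real.norm_eq_abs, sq_abs]
  ring

lemma mem_sphere2_iff (x : E3) : x ∈ sphere2 ↔ ‖planar x‖ ^ 2 + x 2 ^ 2 = 1 := by
  rw [← norm_sq_eq_planar, sphere2, mem_sphere_zero_iff_norm,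
    pow_eq_one_iff_of_nonneg (norm_nonneg x) two_ne_zero]

lemma ne_zero_of_mem_sphere2 {x : E3} (hx : x ∈ sphere2) : x ≠ 0 := by
  rintro rfl
  simp [sphere2] at hx

lemma planar_northPole : planar northPole = 0 := by
  simp [planar, northPole]

lemma planar_southPole : planar southPole = 0 := by
  simp [planar, southPole]

lemma southPole_apply_two : southPole 2 = -1 := by simp [southPole]

lemma northPole_mem_sphere2 : northPole ∈ sphere2 := by
  rw [mem_sphere2_iff, planar_northPole]
  simp [northPole]

lemma southPole_mem_sphere2 : southPole ∈ sphere2 := by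
  simp [mem_sphere2_iff, planar_southPole, southPole_apply_two]

lemma planar_rot3 (α : ℝ) (x : E3) :
    planar (rot3 α x) = Complex.exp (Complex.I * α) * planar x := by
  have hzero : rot3 α x 0 = Real.cos α * x 0 - Real.sin α * x 1 := by simp [rot3]
  have hone : rot3 α x 1 = Real.sin α * x 0 + Real.cos α * x 1 := by simp [rot3]
  rw [mul_comm Complex.I, Complex.exp_ofReal_mul_I, planar, planar, hzero, hone]
  push_cast
  linear_combination -(x 1 * Complex.sin α) * Complex.I_sq

lemma rot3_apply_two (α : ℝ) (x : E3) : rot3 α x 2 = x 2 := by simp [rot3]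

lemma rot3_mem_sphere2 (α : ℝ) {x : E3} (hx : x ∈ sphere2) : rot3 α x ∈ sphere2 := by
  rwa [mem_sphere2_iff, planar_rot3, rot3_apply_two, norm_mul, mul_comm Complex.I,
    Complex.norm_exp_ofReal_mul_I, one_mul, ← mem_sphere2_iff]

lemma rot3_eq_self_of_planar_eq_zero {x : E3} (h0 : planar x = 0) (α : ℝ) : rot3 α x = x :=
  E3_ext_planar (by rw [planar_rot3, h0, mul_zero]) (rot3_apply_two α x)

lemma one_add_normSq_pos (z : ℂ) : 0 < 1 + Complex.normSq z := by
  linarith [Complex.normSq_nonneg z]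

lemma planar_stInv (z : ℂ) : planar (stInv z) = 2 * z / (1 + Complex.normSq z : ℝ) := by
  apply Complex.ext
  · rw [planar_re, Complex.div_ofReal_re]
    simp [stInv]
  · rw [planar_im, Complex.div_ofReal_im]
    simp [stInv]

lemma stInv_apply_two (z : ℂ) :
    stInv z 2 = (1 - Complex.normSq z) / (1 + Complex.normSq z) := by
  simp [stInv]

lemma stInv_mem_sphere2 (z : ℂ) : stInv z ∈ sphere2 := by
  have hpos := one_add_normSq_pos z
  rw [mem_sphere2_iff, planar_stInv, stInv_apply_two, norm_div, norm_mul, Complex.norm_real,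
    Real.norm_of_nonneg hpos.le, div_pow, mul_pow, ← Complex.normSq_eq_norm_sq z,
    Complex.norm_two]
  field_simp
  ring

lemma stInv_zero : stInv 0 = northPole :=
  E3_ext_planar (by simp [planar_stInv, planar_northPole]) (by simp [stInv_apply_two, northPole])

lemma contDiff_stInv {n : WithTop ℕ∞} : ContDiff ℝ n stInv := by
  have hre : ContDiff ℝ n Complex.re := Complex.reCLM.contDiff
  have him : ContDiff ℝ n Complex.im := Complex.imCLM.contDiff
  have hnormSq : ContDiff ℝ n fun z : ℂ => Complex.normSq z := by
    simp only [Complex.normSq_apply]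
    fun_prop
  have hdiv {f : ℂ → ℝ} (hf : ContDiff ℝ n f) :
      ContDiff ℝ n fun z => f z / (1 + Complex.normSq z) :=
    hf.div (contDiff_const.add hnormSq) fun z => (one_add_normSq_pos z).ne'
  refine contDiff_euclidean.2 fun i => ?_
  fin_cases i
  · simpa [stInv] using hdiv (contDiff_const.mul hre)
  · simpa [stInv] using hdiv (contDiff_const.mul him)
  · simpa [stInv] using hdiv (contDiff_const.sub hnormSq)

lemma stInv_planar_div {x : E3} (hx : x ∈ sphere2) (hne : 1 + x 2 ≠ 0) :
    stInv (planar x / (1 + x 2 : ℝ)) = x := by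
  have hnormSq : Complex.normSq (planar x / (1 + x 2 : ℝ)) = (1 - x 2) / (1 + x 2) := by
    rw [mem_sphere2_iff, ← Complex.normSq_eq_norm_sq] at hx
    rw [Complex.normSq_div, Complex.normSq_ofReal]
    field_simp
    linear_combination hx
  have hden : 1 + (1 - x 2) / (1 + x 2) = 2 / (1 + x 2) := by
    field_simp
    ring
  apply E3_ext_planar
  · have : ((1 + x 2 : ℝ) : ℂ) ≠ 0 := Complex.ofReal_ne_zero.2 hne
    rw [planar_stInv, hnormSq, hden, Complex.ofReal_div]
    field_simp
    push_cast
    ring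
  · rw [stInv_apply_two, hnormSq, hden]
    field_simp
    ring

lemma rot3_stInv (α : ℝ) (z : ℂ) :
    rot3 α (stInv z) = stInv (Complex.exp (Complex.I * α) * z) := by
  have hnormSq : Complex.normSq (Complex.exp (Complex.I * α) * z) = Complex.normSq z := by
    rw [mul_comm Complex.I, Complex.normSq_eq_norm_sq, norm_mul, Complex.norm_exp_ofReal_mul_I,
      one_mul, Complex.normSq_eq_norm_sq]
  apply E3_ext_planar
  · rw [planar_rot3, planar_stInv, planar_stInv, hnormSq]
    ring
  · rw [rot3_apply_two, stInv_apply_two, stInv_apply_two, hnormSq]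

lemma exists_eq_exp_mul_exp {z : ℂ} (hz : z ≠ 0) :
    ∃ t α : ℝ, z = Complex.exp (Complex.I * α) * (Real.exp t : ℝ) :=
  ⟨Real.log ‖z‖, z.arg, by
    rw [Real.exp_log (norm_pos_iff.2 hz), mul_comm, mul_comm Complex.I,
      Complex.norm_mul_exp_arg_mul_I]⟩

lemma exists_eq_rot3_stInv_exp {x : E3} (hx : x ∈ sphere2) (h0 : planar x ≠ 0) :
    ∃ t α : ℝ, x = rot3 α (stInv (Real.exp t)) := by
  have hne : 1 + x 2 ≠ 0 := fun h => h0 <| by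
    have hheight : x 2 = -1 := by linarith
    simpa [mem_sphere2_iff, hheight] using hx
  obtain ⟨t, α, h⟩ := exists_eq_exp_mul_exp (div_ne_zero h0 (Complex.ofReal_ne_zero.2 hne))
  exact ⟨t, α, by rw [rot3_stInv, ← h, stInv_planar_div hx hne]⟩

lemma neg_stInv {z : ℂ} (hz : z ≠ 0) : -stInv z = stInv (-(starRingEnd ℂ z)⁻¹) := by
  have hpos : 0 < Complex.normSq z := Complex.normSq_pos.2 hz
  have hnormSq : Complex.normSq (-(starRingEnd ℂ z)⁻¹) = (Complex.normSq z)⁻¹ := by simp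
  have hden : ((1 + Complex.normSq z : ℝ) : ℂ) ≠ 0 :=
    Complex.ofReal_ne_zero.2 (one_add_normSq_pos z).ne'
  apply E3_ext_planar
  · rw [← neg_one_smul ℝ, planar_smul, planar_stInv, planar_stInv, hnormSq,
      Complex.inv_def, Complex.conj_conj, Complex.normSq_conj]
    have hinv : 1 + (Complex.normSq z)⁻¹ = (1 + Complex.normSq z) / Complex.normSq z := by
      field_simp
      ring
    rw [hinv]
    have : (Complex.normSq z : ℂ) ≠ 0 := Complex.ofReal_ne_zero.2 hpos.ne'
    push_cast at hden ⊢
    field_simp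
  · rw [PiLp.neg_apply, stInv_apply_two, stInv_apply_two, hnormSq]
    field_simp
    ring

lemma tendsto_stInv_cobounded :
    Filter.Tendsto stInv (Bornology.cobounded ℂ) (nhds southPole) := by
  have hconj : Filter.Tendsto (fun z : ℂ => -(starRingEnd ℂ z)⁻¹) (Bornology.cobounded ℂ)
      (nhds 0) := by
    have h := Complex.continuous_conj.tendsto (0 : ℂ)
    simpa using (h.comp (Filter.tendsto_inv₀_cobounded (α := ℂ))).neg
  have hlim := ((contDiff_stInv (n := 0)).continuous.tendsto 0).comp hconj |>.neg
  have hpole : -stInv 0 = southPole := by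
    rw [stInv_zero]
    exact E3_ext_planar (by simp [planar, northPole, southPole]) (by simp [northPole, southPole])
  rw [hpole] at hlim
  refine hlim.congr' ?_
  filter_upwards [Bornology.eventually_ne_cobounded (0 : ℂ)] with z hz
  rw [Function.comp_apply, ← neg_stInv hz, neg_neg]

/-! ### Degree-zero homogeneous maps in cylinder coordinates -/

lemma nsq_smul (c : ℝ) (p : V5) : nsq (c • p) = c ^ 2 * nsq p := by
  simp only [nsq, Prod.smul_fst, Prod.smul_snd, smul_eq_mul, Complex.real_smul, map_mul,
    Complex.normSq_ofReal]
  ring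

section Homogeneous

variable {E F : Type*} [NormedAddCommGroup E] [NormedSpace ℝ E] [NormedAddCommGroup F]
  [NormedSpace ℝ F] {Q : E → F}

lemma fderiv_apply_self_eq_zero (hQ : ∀ c : ℝ, 0 < c → ∀ y, Q (c • y) = Q y) (x : E) :
    fderiv ℝ Q x x = 0 := by
  by_cases hd : DifferentiableAt ℝ Q x
  · have hray : HasDerivAt (fun s : ℝ => s • x) x 1 := by
      simpa using (hasDerivAt_id (1 : ℝ)).smul_const x
    have hcomp : HasDerivAt (fun s : ℝ => Q (s • x)) (fderiv ℝ Q x x) 1 :=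
      HasFDerivAt.comp_hasDerivAt 1 (by simpa using hd.hasFDerivAt) hray
    refine hcomp.unique ((hasDerivAt_const (1 : ℝ) (Q x)).congr_of_eventuallyEq ?_)
    filter_upwards [lt_mem_nhds one_pos] with s hs using hQ s hs x
  · rw [fderiv_zero_of_not_differentiableAt hd, zero_apply]

lemma fderiv_fderiv_apply_self (hQ : ∀ c : ℝ, 0 < c → ∀ y, Q (c • y) = Q y) {x : E}
    (hC : ContDiffAt ℝ 2 Q x) (v : E) :
    fderiv ℝ (fderiv ℝ Q) x v x = -fderiv ℝ Q x v := by
  have hD : DifferentiableAt ℝ (fderiv ℝ Q) x :=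
    (hC.fderiv_right (m := 1) le_rfl).differentiableAt one_ne_zero
  have hEuler := hD.hasFDerivAt.clm_apply (hasFDerivAt_id x)
  simp only [id_eq, fderiv_apply_self_eq_zero hQ] at hEuler
  have hv := congrArg (fun L : E →L[ℝ] F => L v) (hEuler.unique (hasFDerivAt_const 0 x))
  simp only [add_apply, ContinuousLinearMap.comp_apply,
    ContinuousLinearMap.flip_apply, zero_apply, ContinuousLinearMap.id_apply] at hv
  exact eq_neg_of_add_eq_zero_right hv

lemma deriv_comp_curve {c c' : ℝ → E} (hQ : ∀ s, DifferentiableAt ℝ Q (c s))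
    (hc : ∀ s, HasDerivAt c (c' s) s) :
    deriv (fun s => Q (c s)) = fun s => fderiv ℝ Q (c s) (c' s) :=
  funext fun s => ((hQ s).hasFDerivAt.comp_hasDerivAt s (hc s)).deriv

lemma deriv_deriv_comp_curve {c c' c'' : ℝ → E} (hQ : ∀ s, ContDiffAt ℝ 2 Q (c s))
    (hc : ∀ s, HasDerivAt c (c' s) s) (hc' : ∀ s, HasDerivAt c' (c'' s) s) (s : ℝ) :
    deriv (deriv fun s => Q (c s)) s =
      fderiv ℝ (fderiv ℝ Q) (c s) (c' s) (c' s) + fderiv ℝ Q (c s) (c'' s) := by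
  have hD : DifferentiableAt ℝ (fderiv ℝ Q) (c s) :=
    ((hQ s).fderiv_right (m := 1) le_rfl).differentiableAt one_ne_zero
  rw [deriv_comp_curve (fun s => (hQ s).differentiableAt two_ne_zero) hc]
  exact ((hD.hasFDerivAt.comp_hasDerivAt s (hc s)).clm_apply (hc' s)).deriv

end Homogeneous

/-- The point with longitude `α` and parameter `t` on the cylinder of radius one around the
`x₃`-axis. The height is `-sinh t` because the radial projection to the sphere then becomes
`stInv (exp (t + iα))`, so that `(t, α)` are conformal coordinates. -/
def cylPoint (t α : ℝ) : E3 :=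
  Real.cos α • EuclideanSpace.single 0 1 + Real.sin α • EuclideanSpace.single 1 1 -
    Real.sinh t • EuclideanSpace.single 2 1

lemma planar_cylPoint (t α : ℝ) : planar (cylPoint t α) = Complex.exp (Complex.I * α) := by
  rw [mul_comm, Complex.exp_ofReal_mul_I]
  simp [planar, cylPoint]

lemma cylPoint_apply_two (t α : ℝ) : cylPoint t α 2 = -Real.sinh t := by simp [cylPoint]

lemma norm_cylPoint (t α : ℝ) : ‖cylPoint t α‖ = Real.cosh t := by
  refine (pow_left_inj₀ (norm_nonneg _) (Real.cosh_pos t).le two_ne_zero).1 ?_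
  rw [norm_sq_eq_planar, planar_cylPoint, mul_comm, Complex.norm_exp_ofReal_mul_I,
    cylPoint_apply_two, Real.cosh_sq]
  ring

lemma cylPoint_ne_zero (t α : ℝ) : cylPoint t α ≠ 0 :=
  norm_pos_iff.1 (norm_cylPoint t α ▸ Real.cosh_pos t)

lemma inv_norm_smul_cylPoint (t α : ℝ) :
    ‖cylPoint t α‖⁻¹ • cylPoint t α = rot3 α (stInv (Real.exp t)) := by
  have hexp : Real.exp t ≠ 0 := (Real.exp_pos t).ne'
  have hcosh : (Real.cosh t)⁻¹ = 2 * Real.exp t / (1 + Real.exp t * Real.exp t) := by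
    rw [Real.cosh_eq, Real.exp_neg]
    field_simp
    ring
  apply E3_ext_planar
  · rw [planar_smul, planar_rot3, planar_cylPoint, planar_stInv, norm_cylPoint, hcosh,
      Complex.normSq_ofReal]
    push_cast
    ring
  · rw [rot3_apply_two, stInv_apply_two, PiLp.smul_apply, cylPoint_apply_two, norm_cylPoint,
      hcosh, Complex.normSq_ofReal, smul_eq_mul, Real.sinh_eq, Real.exp_neg]
    field_simp
    ring

lemma hasDerivAt_cylPoint_left (t α : ℝ) :
    HasDerivAt (fun s => cylPoint s α) (-Real.cosh t • EuclideanSpace.single 2 1) t := by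
  rw [neg_smul]
  exact ((Real.hasDerivAt_sinh t).smul_const _).const_sub _

lemma hasDerivAt_cylPoint_right (t α : ℝ) :
    HasDerivAt (cylPoint t)
      (-Real.sin α • EuclideanSpace.single 0 1 + Real.cos α • EuclideanSpace.single 1 1) α :=
  (((Real.hasDerivAt_cos α).smul_const _).add ((Real.hasDerivAt_sin α).smul_const _)).sub_const _

section Cylinder

variable {Q : E3 → V5}

lemma lap_eq_sum_fderiv_fderiv {x : E3} (hC : ContDiffAt ℝ 2 Q x) :
    lap Q x = ∑ i : Fin 3, fderiv ℝ (fderiv ℝ Q) x (EuclideanSpace.single i 1)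
      (EuclideanSpace.single i 1) := by
  have hD : DifferentiableAt ℝ (fderiv ℝ Q) x :=
    (hC.fderiv_right (m := 1) le_rfl).differentiableAt one_ne_zero
  refine Finset.sum_congr rfl fun i _ => ?_
  rw [fderiv_clm_apply hD (differentiableAt_const _)]
  simp

lemma cylPoint_zero (t : ℝ) :
    cylPoint t 0 = EuclideanSpace.single 0 1 - Real.sinh t • EuclideanSpace.single 2 1 := by
  simp [cylPoint]

lemma fderiv_cylPoint_single_zero (hQ : ∀ c : ℝ, 0 < c → ∀ y, Q (c • y) = Q y) (t : ℝ) :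
    fderiv ℝ Q (cylPoint t 0) (EuclideanSpace.single 0 1) =
      Real.sinh t • fderiv ℝ Q (cylPoint t 0) (EuclideanSpace.single 2 1) := by
  have hEuler := fderiv_apply_self_eq_zero hQ (cylPoint t 0)
  nth_rw 2 [cylPoint_zero] at hEuler
  rwa [map_sub, map_smul, sub_eq_zero] at hEuler

lemma fderiv_fderiv_cylPoint_single_zero (hQ : ∀ c : ℝ, 0 < c → ∀ y, Q (c • y) = Q y) {t : ℝ}
    (hC : ContDiffAt ℝ 2 Q (cylPoint t 0)) :
    fderiv ℝ (fderiv ℝ Q) (cylPoint t 0) (EuclideanSpace.single 0 1)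
        (EuclideanSpace.single 0 1) =
      Real.sinh t ^ 2 • fderiv ℝ (fderiv ℝ Q) (cylPoint t 0) (EuclideanSpace.single 2 1)
        (EuclideanSpace.single 2 1) -
      (2 * Real.sinh t) • fderiv ℝ Q (cylPoint t 0) (EuclideanSpace.single 2 1) := by
  have hEuler (v : E3) : fderiv ℝ (fderiv ℝ Q) (cylPoint t 0) v (EuclideanSpace.single 0 1) =
      Real.sinh t • fderiv ℝ (fderiv ℝ Q) (cylPoint t 0) v (EuclideanSpace.single 2 1) -
        fderiv ℝ Q (cylPoint t 0) v := by
    have h := fderiv_fderiv_apply_self hQ hC v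
    nth_rw 2 [cylPoint_zero] at h
    rw [map_sub, map_smul] at h
    rw [sub_eq_add_neg, ← h, add_sub_cancel]
  rw [hEuler, (hC.isSymmSndFDerivAt (by simp)).eq, hEuler, fderiv_cylPoint_single_zero hQ]
  module

lemma lap_cylPoint (hQ : ∀ c : ℝ, 0 < c → ∀ y, Q (c • y) = Q y)
    (hC : ∀ x ≠ 0, ContDiffAt ℝ 2 Q x) (t : ℝ) :
    lap Q (cylPoint t 0) =
      deriv (deriv fun s => Q (cylPoint s 0)) t + deriv (deriv fun α => Q (cylPoint t α)) 0 := by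
  have hCt (s α : ℝ) := hC (cylPoint s α) (cylPoint_ne_zero s α)
  have hleft (s : ℝ) :
      HasDerivAt (fun s => -Real.cosh s • (EuclideanSpace.single 2 1 : E3))
        (-Real.sinh s • EuclideanSpace.single 2 1) s :=
    (Real.hasDerivAt_cosh s).neg.smul_const _
  have hright (α : ℝ) :
      HasDerivAt (fun α => -Real.sin α • (EuclideanSpace.single 0 1 : E3) +
          Real.cos α • EuclideanSpace.single 1 1)
        (-Real.cos α • EuclideanSpace.single 0 1 + -Real.sin α • EuclideanSpace.single 1 1) α :=
    ((Real.hasDerivAt_sin α).neg.smul_const _).add ((Real.hasDerivAt_cos α).smul_const _)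
  rw [deriv_deriv_comp_curve (fun s => hCt s 0) (fun s => hasDerivAt_cylPoint_left s 0) hleft,
    deriv_deriv_comp_curve (hCt t) (hasDerivAt_cylPoint_right t) hright,
    lap_eq_sum_fderiv_fderiv (hCt t 0), Fin.sum_univ_three,
    fderiv_fderiv_cylPoint_single_zero hQ (hCt t 0)]
  simp only [map_smul, smul_apply, Real.sin_zero, Real.cos_zero, neg_zero, zero_smul, one_smul,
    neg_smul, zero_add, add_zero, map_neg, neg_apply, fderiv_cylPoint_single_zero hQ,
    smul_neg, neg_neg, smul_smul, ← sq, Real.cosh_sq]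
  module

lemma gradSq_cylPoint (hQ : ∀ c : ℝ, 0 < c → ∀ y, Q (c • y) = Q y)
    (hC : ∀ x ≠ 0, DifferentiableAt ℝ Q x) (t : ℝ) :
    gradSq Q (cylPoint t 0) =
      nsq (deriv (fun s => Q (cylPoint s 0)) t) + nsq (deriv (fun α => Q (cylPoint t α)) 0) := by
  have hCt (s α : ℝ) := hC (cylPoint s α) (cylPoint_ne_zero s α)
  rw [deriv_comp_curve (fun s => hCt s 0) (fun s => hasDerivAt_cylPoint_left s 0),
    deriv_comp_curve (hCt t) (hasDerivAt_cylPoint_right t), gradSq, Fin.sum_univ_three,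
    fderiv_cylPoint_single_zero hQ]
  simp only [map_smul, Real.sin_zero, Real.cos_zero, neg_zero, zero_smul, one_smul, zero_add,
    nsq_smul, neg_sq, Real.cosh_sq]
  ring

end Cylinder

/-! ### Meridians of equivariant harmonic maps into the two-sphere -/

section Calculus

variable {F : Type*} [NormedAddCommGroup F] [NormedSpace ℝ F]

lemma eq_zero_of_hasDerivAt_zero_of_tendsto_atBot {f : ℝ → F} (hf : ∀ t, HasDerivAt f 0 t)
    (hlim : Filter.Tendsto f Filter.atBot (nhds 0)) (t : ℝ) : f t = 0 := by
  have hconst (s : ℝ) : f s = f t :=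
    is_const_of_deriv_eq_zero (fun r => (hf r).differentiableAt) (fun r => (hf r).deriv) s t
  exact tendsto_nhds_unique (tendsto_const_nhds.congr fun s => (hconst s).symm) hlim

lemma eq_zero_of_norm_deriv_le_mul_norm {f : ℝ → F} (hf : Differentiable ℝ f) {K : ℝ}
    (hbound : ∀ t, ‖deriv f t‖ ≤ K * ‖f t‖) {t₀ : ℝ} (h₀ : f t₀ = 0) (t : ℝ) : f t = 0 := by
  have hright {g : ℝ → F} {a b : ℝ} (hg : Differentiable ℝ g)
      (hg' : ∀ s, ‖deriv g s‖ ≤ K * ‖g s‖) (ha : g a = 0) (hab : a ≤ b) : g b = 0 :=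
    eq_zero_of_abs_deriv_le_mul_abs_self_of_eq_zero_right hg.continuous.continuousOn
      (fun s _ => (hg s).hasDerivAt.hasDerivWithinAt) ha (fun s _ => hg' s) b
      (Set.right_mem_Icc.2 hab)
  rcases le_total t₀ t with hle | hle
  · exact hright hf hbound h₀ hle
  · have hreflect := hright (g := fun s => f (-s)) (hf.comp differentiable_neg)
      (fun s => by simpa [deriv_comp_neg] using hbound (-s)) (by simpa using h₀) (neg_le_neg hle)
    simpa using hreflect

lemma exists_eq_mul_exp_of_hasDerivAt {w : ℝ → ℂ} {k : ℝ}
    (hw : ∀ t, HasDerivAt w (k * w t) t) : ∃ μ : ℂ, ∀ t, w t = μ * (Real.exp (k * t) : ℝ) := by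
  have hzero (t : ℝ) : HasDerivAt (fun t => w t * (Real.exp (-(k * t)) : ℝ)) 0 t := by
    have hexp := (((hasDerivAt_id t).const_mul k).neg.exp).ofReal_comp
    refine ((hw t).mul hexp).congr_deriv ?_
    push_cast
    simp only [id]
    ring
  refine ⟨w 0, fun t => ?_⟩
  have hconst := is_const_of_deriv_eq_zero (fun r => (hzero r).differentiableAt)
    (fun r => (hzero r).deriv) t 0
  simp only [mul_zero, neg_zero, Real.exp_zero, Complex.ofReal_one, mul_one] at hconst
  rw [← hconst, mul_assoc, ← Complex.ofReal_mul, ← Real.exp_add, neg_add_cancel, Real.exp_zero,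
    Complex.ofReal_one, mul_one]

end Calculus

/-- The energy density of the harmonic map `(t, α) ↦ (h t, exp (ikα) ζ t)` in the conformal
coordinates `(t, α)`. -/
def meridianEnergy (k : ℝ) (h : ℝ → ℝ) (ζ : ℝ → ℂ) (t : ℝ) : ℝ :=
  deriv h t ^ 2 + ‖deriv ζ t‖ ^ 2 + k ^ 2 * ‖ζ t‖ ^ 2

/-- The restriction `(h, ζ)` to a meridian of a harmonic map into the unit sphere of `ℝ ⊕ ℂ` which
intertwines the rotations by `α` and by `k α`. The parameter `t` is the logarithm of the
stereographic radius, so the limits at `-∞` are values at the north pole. -/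
structure IsHarmonicMeridian (k : ℝ) (h : ℝ → ℝ) (ζ : ℝ → ℂ) : Prop where
  contDiff_height : ContDiff ℝ 2 h
  contDiff_angular : ContDiff ℝ 2 ζ
  sq_add_norm_sq (t : ℝ) : h t ^ 2 + ‖ζ t‖ ^ 2 = 1
  deriv_deriv_height (t : ℝ) : deriv (deriv h) t = -meridianEnergy k h ζ t * h t
  deriv_deriv_angular (t : ℝ) : deriv (deriv ζ) t = ((k ^ 2 - meridianEnergy k h ζ t : ℝ) : ℂ) * ζ t
  tendsto_angular : Filter.Tendsto ζ Filter.atBot (nhds 0)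
  tendsto_deriv_height : Filter.Tendsto (deriv h) Filter.atBot (nhds 0)
  tendsto_deriv_angular : Filter.Tendsto (deriv ζ) Filter.atBot (nhds 0)

namespace IsHarmonicMeridian

variable {k : ℝ} {h : ℝ → ℝ} {ζ : ℝ → ℂ}

lemma hasDerivAt_height (H : IsHarmonicMeridian k h ζ) (t : ℝ) : HasDerivAt h (deriv h t) t :=
  (H.contDiff_height.differentiable two_ne_zero t).hasDerivAt

lemma hasDerivAt_angular (H : IsHarmonicMeridian k h ζ) (t : ℝ) : HasDerivAt ζ (deriv ζ t) t :=
  (H.contDiff_angular.differentiable two_ne_zero t).hasDerivAt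

lemma hasDerivAt_deriv_height (H : IsHarmonicMeridian k h ζ) (t : ℝ) :
    HasDerivAt (deriv h) (-meridianEnergy k h ζ t * h t) t :=
  H.deriv_deriv_height t ▸ (H.contDiff_height.differentiable_deriv_two t).hasDerivAt

lemma hasDerivAt_deriv_angular (H : IsHarmonicMeridian k h ζ) (t : ℝ) :
    HasDerivAt (deriv ζ) (((k ^ 2 - meridianEnergy k h ζ t : ℝ) : ℂ) * ζ t) t :=
  H.deriv_deriv_angular t ▸ (H.contDiff_angular.differentiable_deriv_two t).hasDerivAt

lemma height_mul_deriv_add_inner (H : IsHarmonicMeridian k h ζ) (t : ℝ) :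
    h t * deriv h t + inner ℝ (ζ t) (deriv ζ t) = 0 := by
  have hderiv := ((H.hasDerivAt_height t).fun_pow 2).add (H.hasDerivAt_angular t).norm_sq
  have hconst : ((fun s => h s ^ 2) + fun s => ‖ζ s‖ ^ 2) = fun _ => 1 := funext H.sq_add_norm_sq
  have hzero := (hconst ▸ hderiv).unique (hasDerivAt_const t (1 : ℝ))
  simp only [Nat.cast_ofNat, Nat.reduceSub, pow_one] at hzero
  linarith

lemma hopf_re_eq_zero (H : IsHarmonicMeridian k h ζ) (t : ℝ) :
    deriv h t ^ 2 + ‖deriv ζ t‖ ^ 2 - k ^ 2 * ‖ζ t‖ ^ 2 = 0 := by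
  refine eq_zero_of_hasDerivAt_zero_of_tendsto_atBot
    (f := fun t => deriv h t ^ 2 + ‖deriv ζ t‖ ^ 2 - k ^ 2 * ‖ζ t‖ ^ 2) (fun s => ?_) ?_ t
  · have hderiv := (((H.hasDerivAt_deriv_height s).fun_pow 2).add
      (H.hasDerivAt_deriv_angular s).norm_sq).sub
        ((H.hasDerivAt_angular s).norm_sq.const_mul (k ^ 2))
    refine hderiv.congr_deriv ?_
    rw [← Complex.real_smul, inner_smul_right, real_inner_comm]
    have htangent := H.height_mul_deriv_add_inner s
    simp only [Nat.cast_ofNat, Nat.reduceSub, pow_one]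
    linear_combination -2 * meridianEnergy k h ζ s * htangent
  · simpa using ((H.tendsto_deriv_height.pow 2).add (H.tendsto_deriv_angular.norm.pow 2)).sub
      ((H.tendsto_angular.norm.pow 2).const_mul (k ^ 2))

lemma hopf_im_eq_zero (H : IsHarmonicMeridian k h ζ) (t : ℝ) :
    (starRingEnd ℂ (ζ t) * deriv ζ t).im = 0 := by
  refine eq_zero_of_hasDerivAt_zero_of_tendsto_atBot
    (f := fun t => (starRingEnd ℂ (ζ t) * deriv ζ t).im) (fun s => ?_) ?_ t
  · have hderiv := Complex.imCLM.hasFDerivAt.comp_hasDerivAt s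
      ((H.hasDerivAt_angular s).star.mul (H.hasDerivAt_deriv_angular s))
    refine hderiv.congr_deriv ?_
    generalize k ^ 2 - meridianEnergy k h ζ s = r
    simp only [Complex.imCLM_apply, RCLike.star_def, Complex.add_im, Complex.mul_im,
      Complex.mul_re, Complex.conj_re, Complex.conj_im, Complex.ofReal_re, Complex.ofReal_im]
    ring
  · have hlim := H.tendsto_angular.star.mul H.tendsto_deriv_angular
    rw [mul_zero] at hlim
    exact (Complex.continuous_im.tendsto 0).comp hlim

lemma conj_mul_deriv (H : IsHarmonicMeridian k h ζ) (t : ℝ) :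
    starRingEnd ℂ (ζ t) * deriv ζ t = -(h t * deriv h t : ℝ) := by
  apply Complex.ext
  · have htangent := H.height_mul_deriv_add_inner t
    rw [Complex.inner] at htangent
    rw [Complex.neg_re, Complex.ofReal_re, mul_comm]
    linarith
  · rw [H.hopf_im_eq_zero, Complex.neg_im, Complex.ofReal_im, neg_zero]

lemma deriv_height_sq (H : IsHarmonicMeridian k h ζ) (t : ℝ) :
    deriv h t ^ 2 = (k * ‖ζ t‖ ^ 2) ^ 2 := by
  have hnorm : ‖ζ t‖ ^ 2 * ‖deriv ζ t‖ ^ 2 = (h t * deriv h t) ^ 2 := by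
    rw [← mul_pow, ← Complex.norm_conj (ζ t), ← norm_mul, H.conj_mul_deriv, norm_neg,
      Complex.norm_real, Real.norm_eq_abs, sq_abs]
  linear_combination (‖ζ t‖ ^ 2) * H.hopf_re_eq_zero t - hnorm - deriv h t ^ 2 * H.sq_add_norm_sq t

lemma angular_ne_zero (H : IsHarmonicMeridian k h ζ) {t₀ : ℝ} (h₀ : ζ t₀ ≠ 0) (t : ℝ) :
    ζ t ≠ 0 := by
  have hbound (s : ℝ) : ‖deriv ζ s‖ ≤ |k| * ‖ζ s‖ := by
    refine le_of_sq_le_sq ?_ (by positivity)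
    rw [mul_pow, sq_abs]
    linarith [H.hopf_re_eq_zero s, sq_nonneg (deriv h s)]
  exact fun ht => h₀ (eq_zero_of_norm_deriv_le_mul_norm
    (H.contDiff_angular.differentiable two_ne_zero) hbound ht t₀)

lemma exists_sign_deriv_height (H : IsHarmonicMeridian k h ζ) (hk : k ≠ 0) (h₀ : ∀ t, ζ t ≠ 0) :
    ∃ ε : ℝ, ε ^ 2 = 1 ∧ ∀ t, deriv h t = -ε * (k * ‖ζ t‖ ^ 2) := by
  have hcont : Continuous fun t => k * ‖ζ t‖ ^ 2 :=
    continuous_const.mul (H.contDiff_angular.continuous.norm.pow 2)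
  have hne (t : ℝ) : k * ‖ζ t‖ ^ 2 ≠ 0 := mul_ne_zero hk (pow_ne_zero 2 (norm_ne_zero_iff.2 (h₀ t)))
  rcases isPreconnected_univ.eq_or_eq_neg_of_sq_eq
    H.contDiff_height.differentiable_deriv_two.continuous.continuousOn hcont.continuousOn
    (fun t _ => H.deriv_height_sq t) (fun {t} _ => hne t) with heq | heq
  · exact ⟨-1, by norm_num, fun t => by simpa using heq (Set.mem_univ t)⟩
  · exact ⟨1, one_pow 2, fun t => by simpa using heq (Set.mem_univ t)⟩

lemma deriv_angular_of_deriv_height (H : IsHarmonicMeridian k h ζ) (h₀ : ∀ t, ζ t ≠ 0) {ε : ℝ}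
    (hh : ∀ t, deriv h t = -ε * (k * ‖ζ t‖ ^ 2)) (t : ℝ) :
    deriv ζ t = (ε * k * h t : ℝ) * ζ t := by
  refine mul_left_cancel₀ ((map_ne_zero (starRingEnd ℂ)).2 (h₀ t)) ?_
  rw [H.conj_mul_deriv, hh, mul_left_comm _ (_ : ℂ), Complex.conj_mul']
  push_cast
  ring

lemma one_add_ne_zero (H : IsHarmonicMeridian k h ζ) (h₀ : ∀ t, ζ t ≠ 0) {ε : ℝ}
    (hε : ε ^ 2 = 1) (t : ℝ) : 1 + ε * h t ≠ 0 := by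
  intro hzero
  have hsq : h t ^ 2 = 1 := by
    linear_combination (-h t ^ 2) * hε + (ε * h t - 1) * hzero
  exact h₀ t (by simpa [hsq] using H.sq_add_norm_sq t)

lemma hasDerivAt_stereographic (H : IsHarmonicMeridian k h ζ) (h₀ : ∀ t, ζ t ≠ 0) {ε : ℝ}
    (hε : ε ^ 2 = 1) (hh : ∀ t, deriv h t = -ε * (k * ‖ζ t‖ ^ 2)) (t : ℝ) :
    HasDerivAt (fun t => ε * ζ t / (1 + ε * h t : ℝ)) (k * (ε * ζ t / (1 + ε * h t : ℝ))) t := by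
  have hden : ((1 + ε * h t : ℝ) : ℂ) ≠ 0 := Complex.ofReal_ne_zero.2 (H.one_add_ne_zero h₀ hε t)
  have hderiv := ((H.hasDerivAt_angular t).const_mul (ε : ℂ)).div
    (((H.hasDerivAt_height t).const_mul ε).const_add 1).ofReal_comp hden
  have hε' : (ε : ℂ) ^ 2 = 1 := by exact_mod_cast hε
  refine hderiv.congr_deriv ?_
  rw [H.deriv_angular_of_deriv_height h₀ hh, hh, eq_sub_of_add_eq' (H.sq_add_norm_sq t)]
  push_cast at hden ⊢
  field_simp
  linear_combination ε * k * ζ t * hε'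

theorem exists_eq_stInv (H : IsHarmonicMeridian k h ζ) (hk : k ≠ 0) {t₀ : ℝ} (ht₀ : ζ t₀ ≠ 0) :
    ∃ ε : ℝ, ε ^ 2 = 1 ∧ ∃ μ : ℂ, μ ≠ 0 ∧ ∀ t,
      h t = ε * stInv (μ * (Real.exp (k * t) : ℝ)) 2 ∧
        ζ t = ε * planar (stInv (μ * (Real.exp (k * t) : ℝ))) := by
  have h₀ := H.angular_ne_zero ht₀
  obtain ⟨ε, hε, hh⟩ := H.exists_sign_deriv_height hk h₀
  obtain ⟨μ, hμ⟩ := exists_eq_mul_exp_of_hasDerivAt (H.hasDerivAt_stereographic h₀ hε hh)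
  have hεε : (ε : ℂ) * ε = 1 := by exact_mod_cast sq ε ▸ hε
  refine ⟨ε, hε, μ, ?_, fun t => ?_⟩
  · rintro rfl
    exact div_ne_zero (mul_ne_zero (left_ne_zero_of_mul_eq_one hεε) ht₀)
      (Complex.ofReal_ne_zero.2 (H.one_add_ne_zero h₀ hε t₀)) ((hμ t₀).trans (zero_mul _))
  · obtain ⟨x, hplanar, hheight⟩ := exists_planar_eq (ε * ζ t) (ε * h t)
    have hx : x ∈ sphere2 := by
      rw [mem_sphere2_iff, hplanar, hheight, norm_mul, mul_pow, mul_pow, Complex.norm_real,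
        Real.norm_eq_abs, sq_abs, hε, one_mul, one_mul, add_comm, H.sq_add_norm_sq]
    have hstereographic := stInv_planar_div hx (hheight ▸ H.one_add_ne_zero h₀ hε t)
    rw [hplanar, hheight, hμ t] at hstereographic
    rw [hstereographic, hplanar, hheight, ← mul_assoc, ← mul_assoc, hεε, ← sq, hε, one_mul,
      one_mul]
    exact ⟨rfl, rfl⟩

end IsHarmonicMeridian

/-! ### Equivariant harmonic spheres along a meridian -/

/-- The infinitesimal generator of the circle action `circAct`. -/
def circGen (p : V5) : V5 := (0, Complex.I * p.2.1, 2 * Complex.I * p.2.2)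

lemma circAct_zero (p : V5) : circAct 0 p = p := by simp [circAct]

lemma hasDerivAt_circAct (p : V5) (α : ℝ) :
    HasDerivAt (fun α => circAct α p) (circAct α (circGen p)) α := by
  have hexp (c w : ℂ) :
      HasDerivAt (fun α : ℝ => Complex.exp (c * α) * w) (Complex.exp (c * α) * (c * w)) α :=
    ((((hasDerivAt_id (α : ℂ)).const_mul c).cexp.comp_ofReal).mul_const w).congr_deriv
      (by simp [mul_assoc])
  exact (hasDerivAt_const α p.1).prodMk ((hexp Complex.I p.2.1).prodMk (hexp _ p.2.2))

lemma deriv_circAct (p : V5) :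
    deriv (fun α => circAct α p) = fun α => circAct α (circGen p) :=
  funext fun α => (hasDerivAt_circAct p α).deriv

/-- The two complex coordinates on `V5`, indexed so that `angular j` has weight `j + 1` under the
circle action. -/
def angular : Fin 2 → V5 →L[ℝ] ℂ :=
  ![(ContinuousLinearMap.fst ℝ ℂ ℂ).comp (ContinuousLinearMap.snd ℝ ℝ (ℂ × ℂ)),
    (ContinuousLinearMap.snd ℝ ℂ ℂ).comp (ContinuousLinearMap.snd ℝ ℝ (ℂ × ℂ))]

lemma angular_zero (p : V5) : angular 0 p = p.2.1 := rfl

lemma angular_one (p : V5) : angular 1 p = p.2.2 := rfl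

lemma V5_ext_angular {p q : V5} (hfst : p.1 = q.1) (hangular : ∀ j, angular j p = angular j q) :
    p = q :=
  Prod.ext hfst (Prod.ext (hangular 0) (hangular 1))

lemma angular_circAct (j : Fin 2) (α : ℝ) (p : V5) :
    angular j (circAct α p) = Complex.exp (Complex.I * ((j + 1 : ℝ) * α : ℝ)) * angular j p := by
  fin_cases j
  · simp [angular_zero, circAct]
  · simp only [Fin.mk_one, angular_one, circAct]
    push_cast
    ring_nf

lemma angular_circGen (j : Fin 2) (p : V5) :
    angular j (circGen p) = (j + 1 : ℝ) * Complex.I * angular j p := by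
  fin_cases j
  · simp [angular_zero, circGen]
  · norm_num [angular_one, circGen]

lemma nsq_eq_sum_angular (p : V5) : nsq p = p.1 ^ 2 + ∑ j, ‖angular j p‖ ^ 2 := by
  rw [Fin.sum_univ_two, angular_zero, angular_one, nsq, Complex.normSq_eq_norm_sq,
    Complex.normSq_eq_norm_sq, add_assoc]

lemma nsq_eq_of_angular_eq_zero {j : Fin 2} {p : V5} (hp : ∀ i ≠ j, angular i p = 0) :
    nsq p = p.1 ^ 2 + ‖angular j p‖ ^ 2 := by
  rw [nsq_eq_sum_angular, Fintype.sum_eq_single j fun i hi => by simp [hp i hi]]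

lemma angular_eq_zero_of_circAct_eq_self {p : V5} (hp : ∀ α, circAct α p = p) (j : Fin 2) :
    angular j p = 0 := by
  have hderiv := hasDerivAt_circAct p 0
  simp only [hp] at hderiv
  have hgen := congrArg (angular j) (hderiv.unique (hasDerivAt_const 0 p))
  rw [map_zero, circAct_zero, angular_circGen] at hgen
  have hweight : ((j + 1 : ℝ) : ℂ) ≠ 0 := Complex.ofReal_ne_zero.2 (by positivity)
  exact (mul_eq_zero.1 hgen).resolve_left (mul_ne_zero hweight Complex.I_ne_zero)

lemma homExt_smul (ω : E3 → V5) (c : ℝ) (hc : 0 < c) (x : E3) :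
    homExt ω (c • x) = homExt ω x := by
  unfold homExt
  rw [norm_smul, Real.norm_of_nonneg hc.le, mul_inv, smul_smul, mul_right_comm,
    inv_mul_cancel₀ hc.ne', one_mul]

lemma homExt_of_mem_sphere2 (ω : E3 → V5) {x : E3} (hx : x ∈ sphere2) : homExt ω x = ω x := by
  rw [homExt, mem_sphere_zero_iff_norm.1 hx, inv_one, one_smul]

lemma tendsto_ofReal_exp_atBot :
    Filter.Tendsto (fun t : ℝ => (Real.exp t : ℂ)) Filter.atBot (nhds 0) :=
  (Complex.continuous_ofReal.tendsto' 0 0 Complex.ofReal_zero).comp Real.tendsto_exp_atBot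

lemma tendsto_deriv_comp_exp_atBot {F : Type*} [NormedAddCommGroup F] [NormedSpace ℝ F]
    {g : ℂ → F} (hg : ContDiff ℝ 1 g) :
    Filter.Tendsto (deriv fun t : ℝ => g (Real.exp t)) Filter.atBot (nhds 0) := by
  have hderiv (t : ℝ) : deriv (fun t : ℝ => g (Real.exp t)) t =
      fderiv ℝ g (Real.exp t) (Real.exp t) :=
    ((hg.differentiable one_ne_zero _).hasFDerivAt.comp_hasDerivAt t
      (Real.hasDerivAt_exp t).ofReal_comp).deriv
  have hcont : Continuous fun z => fderiv ℝ g z z :=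
    (hg.continuous_fderiv one_ne_zero).clm_apply continuous_id
  rw [funext hderiv, ← map_zero (fderiv ℝ g 0)]
  exact (hcont.tendsto 0).comp tendsto_ofReal_exp_atBot

/-- The restriction of `ω` to the meridian of longitude zero, parametrised by the logarithm of the
stereographic radius. -/
def meridian (ω : E3 → V5) (t : ℝ) : V5 := ω (stInv (Real.exp t))

lemma homExt_cylPoint {ω : E3 → V5} (heq : EquivariantS ω) (t α : ℝ) :
    homExt ω (cylPoint t α) = circAct α (meridian ω t) := by
  rw [homExt, inv_norm_smul_cylPoint, heq α _ (stInv_mem_sphere2 _), meridian]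

lemma angular_eq_zero_of_planar_eq_zero {ω : E3 → V5} (heq : EquivariantS ω) {x : E3}
    (hx : x ∈ sphere2) (h0 : planar x = 0) (j : Fin 2) : angular j (ω x) = 0 :=
  angular_eq_zero_of_circAct_eq_self
    (fun α => by rw [← heq α x hx, rot3_eq_self_of_planar_eq_zero h0]) j

namespace IsHarmonicSphere

variable {ω : E3 → V5}

lemma contDiffAt_homExt (hH : IsHarmonicSphere ω) {x : E3} (hx : x ≠ 0) :
    ContDiffAt ℝ 2 (homExt ω) x :=
  ((hH.2.1 x hx).contDiffAt (isOpen_compl_singleton.mem_nhds hx)).of_le ENat.LEInfty.out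

lemma contDiff_comp_stInv (hH : IsHarmonicSphere ω) : ContDiff ℝ 2 fun z => ω (stInv z) := by
  have hext : (fun z => ω (stInv z)) = homExt ω ∘ stInv :=
    funext fun z => (homExt_of_mem_sphere2 ω (stInv_mem_sphere2 z)).symm
  rw [hext]
  exact contDiff_iff_contDiffAt.2 fun z =>
    (hH.contDiffAt_homExt (ne_zero_of_mem_sphere2 (stInv_mem_sphere2 z))).comp z
      contDiff_stInv.contDiffAt

lemma continuousOn (hH : IsHarmonicSphere ω) : ContinuousOn ω sphere2 :=
  ContinuousOn.congr (fun _ hx =>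
    (hH.contDiffAt_homExt (ne_zero_of_mem_sphere2 hx)).continuousAt.continuousWithinAt)
    fun _ hx => (homExt_of_mem_sphere2 ω hx).symm

lemma contDiff_meridian (hH : IsHarmonicSphere ω) : ContDiff ℝ 2 (meridian ω) :=
  hH.contDiff_comp_stInv.comp (Complex.ofRealCLM.contDiff.comp Real.contDiff_exp)

lemma tendsto_deriv_meridian (hH : IsHarmonicSphere ω) :
    Filter.Tendsto (deriv (meridian ω)) Filter.atBot (nhds 0) :=
  tendsto_deriv_comp_exp_atBot (hH.contDiff_comp_stInv.of_le one_le_two)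

lemma tendsto_meridian_atBot (hH : IsHarmonicSphere ω) :
    Filter.Tendsto (meridian ω) Filter.atBot (nhds (ω northPole)) := by
  rw [← stInv_zero]
  exact (hH.contDiff_comp_stInv.continuous.tendsto 0).comp tendsto_ofReal_exp_atBot

lemma tendsto_meridian_atTop (hH : IsHarmonicSphere ω) :
    Filter.Tendsto (meridian ω) Filter.atTop (nhds (ω southPole)) := by
  have hexp : Filter.Tendsto (fun t : ℝ => (Real.exp t : ℂ)) Filter.atTop
      (Bornology.cobounded ℂ) := by
    rw [← tendsto_norm_atTop_iff_cobounded]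
    simpa using Real.tendsto_exp_atTop
  refine (hH.continuousOn southPole southPole_mem_sphere2).tendsto.comp ?_
  exact tendsto_nhdsWithin_iff.2 ⟨tendsto_stInv_cobounded.comp hexp,
    .of_forall fun t => stInv_mem_sphere2 _⟩

lemma deriv_deriv_meridian (hH : IsHarmonicSphere ω) (heq : EquivariantS ω) (t : ℝ) :
    deriv (deriv (meridian ω)) t + circGen (circGen (meridian ω t)) +
      (nsq (deriv (meridian ω) t) + nsq (circGen (meridian ω t))) • meridian ω t = 0 := by
  have hC (x : E3) (hx : x ≠ 0) := hH.contDiffAt_homExt hx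
  have hharmonic := hH.2.2 (cylPoint t 0) (cylPoint_ne_zero t 0)
  rw [lap_cylPoint (homExt_smul ω) hC, gradSq_cylPoint (homExt_smul ω)
    fun x hx => (hC x hx).differentiableAt two_ne_zero] at hharmonic
  simpa only [homExt_cylPoint heq, deriv_circAct, circAct_zero] using hharmonic

end IsHarmonicSphere

/-! ### Equatorial harmonic spheres -/

/-- The equatorial embedding `ω_eq^{(j + 1)}`. -/
def equatorial : Fin 2 → E3 → V5 := ![omegaEq1, omegaEq2]

lemma equatorial_fst (j : Fin 2) (x : E3) : (equatorial j x).1 = x 2 := by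
  fin_cases j <;> rfl

lemma angular_equatorial_self (j : Fin 2) (x : E3) : angular j (equatorial j x) = planar x := by
  fin_cases j <;> rfl

lemma angular_equatorial_of_ne {i j : Fin 2} (hij : i ≠ j) (x : E3) :
    angular i (equatorial j x) = 0 := by
  fin_cases i <;> fin_cases j <;> first | exact absurd rfl hij | rfl

lemma equatorial_southPole (j : Fin 2) : equatorial j southPole = (-1, 0, 0) := by
  refine V5_ext_angular ((equatorial_fst j _).trans southPole_apply_two) fun i => ?_
  trans 0
  · rcases eq_or_ne i j with rfl | hij
    · exact (angular_equatorial_self i _).trans planar_southPole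
    · exact angular_equatorial_of_ne hij _
  · fin_cases i <;> rfl

lemma continuous_equatorial (j : Fin 2) : Continuous (equatorial j) := by
  have hheight : Continuous fun x : E3 => x 2 := by fun_prop
  fin_cases j
  · exact hheight.prodMk (continuous_planar.prodMk continuous_const)
  · exact hheight.prodMk (continuous_const.prodMk continuous_planar)

lemma circAct_equatorial (j : Fin 2) (α : ℝ) (x : E3) :
    circAct α (equatorial j x) = equatorial j (rot3 ((j + 1) * α) x) := by
  refine V5_ext_angular ?_ fun i => ?_
  · rw [equatorial_fst, rot3_apply_two]
    exact equatorial_fst j x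
  · rcases eq_or_ne i j with rfl | hij
    · rw [angular_circAct, angular_equatorial_self, angular_equatorial_self, planar_rot3]
    · rw [angular_circAct, angular_equatorial_of_ne hij, angular_equatorial_of_ne hij, mul_zero]

lemma circAct_smul (α c : ℝ) (p : V5) : circAct α (c • p) = c • circAct α p := by
  simp [circAct, mul_left_comm]

lemma fst_circGen (p : V5) : (circGen p).1 = 0 := rfl

lemma norm_angular_circGen (j : Fin 2) (p : V5) :
    ‖angular j (circGen p)‖ ^ 2 = (j + 1 : ℝ) ^ 2 * ‖angular j p‖ ^ 2 := by
  simp only [angular_circGen, norm_mul, Complex.norm_I, mul_one, mul_pow, Complex.norm_real,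
    Real.norm_eq_abs, sq_abs]

lemma angular_eq_zero_of_meridian {ω : E3 → V5} {j : Fin 2} (heq : EquivariantS ω)
    (hmeridian : ∀ t, angular j (meridian ω t) = 0) {x : E3} (hx : x ∈ sphere2) :
    angular j (ω x) = 0 := by
  by_cases h0 : planar x = 0
  · exact angular_eq_zero_of_planar_eq_zero heq hx h0 j
  · obtain ⟨t, α, rfl⟩ := exists_eq_rot3_stInv_exp hx h0
    rw [heq α _ (stInv_mem_sphere2 _), angular_circAct]
    exact mul_eq_zero_of_right _ (hmeridian t)

namespace IsHarmonicSphere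

variable {ω : E3 → V5} {j : Fin 2}

lemma deriv_clm_meridian {F : Type*} [NormedAddCommGroup F] [NormedSpace ℝ F]
    (hH : IsHarmonicSphere ω) (L : V5 →L[ℝ] F) :
    deriv (fun t => L (meridian ω t)) = fun t => L (deriv (meridian ω) t) :=
  funext fun t => (L.hasFDerivAt.comp_hasDerivAt t
    (hH.contDiff_meridian.differentiable two_ne_zero t).hasDerivAt).deriv

lemma deriv_fst_meridian (hH : IsHarmonicSphere ω) :
    deriv (fun t => (meridian ω t).1) = fun t => (deriv (meridian ω) t).1 :=
  hH.deriv_clm_meridian (ContinuousLinearMap.fst ℝ ℝ (ℂ × ℂ))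

lemma deriv_deriv_clm_meridian {F : Type*} [NormedAddCommGroup F] [NormedSpace ℝ F]
    (hH : IsHarmonicSphere ω) (L : V5 →L[ℝ] F) (t : ℝ) :
    deriv (deriv fun t => L (meridian ω t)) t = L (deriv (deriv (meridian ω)) t) := by
  rw [hH.deriv_clm_meridian]
  exact (L.hasFDerivAt.comp_hasDerivAt t
    (hH.contDiff_meridian.differentiable_deriv_two t).hasDerivAt).deriv

lemma meridianEnergy_meridian (hH : IsHarmonicSphere ω)
    (hvanish : ∀ i ≠ j, ∀ x ∈ sphere2, angular i (ω x) = 0) (t : ℝ) :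
    meridianEnergy (j + 1) (fun t => (meridian ω t).1) (fun t => angular j (meridian ω t)) t =
      nsq (deriv (meridian ω) t) + nsq (circGen (meridian ω t)) := by
  have hzero (i : Fin 2) (hi : i ≠ j) (t : ℝ) : angular i (meridian ω t) = 0 :=
    hvanish i hi _ (stInv_mem_sphere2 _)
  have hderiv (i : Fin 2) (hi : i ≠ j) : angular i (deriv (meridian ω) t) = 0 := by
    rw [← congrFun (hH.deriv_clm_meridian (angular i)) t, funext (hzero i hi), deriv_const]
  have hgen (i : Fin 2) (hi : i ≠ j) : angular i (circGen (meridian ω t)) = 0 := by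
    rw [angular_circGen, hzero i hi, mul_zero]
  rw [nsq_eq_of_angular_eq_zero hderiv, nsq_eq_of_angular_eq_zero hgen, norm_angular_circGen,
    fst_circGen, meridianEnergy, hH.deriv_clm_meridian (angular j),
    hH.deriv_fst_meridian]
  ring

lemma isHarmonicMeridian (hH : IsHarmonicSphere ω) (heq : EquivariantS ω)
    (hvanish : ∀ i ≠ j, ∀ x ∈ sphere2, angular i (ω x) = 0) :
    IsHarmonicMeridian (j + 1) (fun t => (meridian ω t).1)
      (fun t => angular j (meridian ω t)) where
  contDiff_height := contDiff_fst.comp hH.contDiff_meridian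
  contDiff_angular := (angular j).contDiff.comp hH.contDiff_meridian
  sq_add_norm_sq t := by
    have hx := stInv_mem_sphere2 (Real.exp t)
    exact (nsq_eq_of_angular_eq_zero fun i hi => hvanish i hi _ hx).symm.trans (hH.1 _ hx)
  deriv_deriv_height t := by
    have hfst := congrArg Prod.fst (hH.deriv_deriv_meridian heq t)
    rw [← hH.meridianEnergy_meridian hvanish] at hfst
    simp only [Prod.fst_add, Prod.smul_fst, Prod.fst_zero, fst_circGen, add_zero,
      smul_eq_mul] at hfst
    rw [neg_mul, ← eq_neg_of_add_eq_zero_left hfst]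
    exact hH.deriv_deriv_clm_meridian (ContinuousLinearMap.fst ℝ ℝ (ℂ × ℂ)) t
  deriv_deriv_angular t := by
    have hangular := congrArg (angular j) (hH.deriv_deriv_meridian heq t)
    rw [← hH.meridianEnergy_meridian hvanish, map_add, map_add, map_smul, map_zero,
      angular_circGen, angular_circGen, Complex.real_smul] at hangular
    rw [hH.deriv_deriv_clm_meridian]
    push_cast at hangular ⊢
    linear_combination hangular - (j + 1 : ℂ) ^ 2 * angular j (meridian ω t) * Complex.I_sq
  tendsto_angular := by
    rw [← angular_eq_zero_of_planar_eq_zero heq northPole_mem_sphere2 planar_northPole j]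
    exact ((angular j).continuous.tendsto _).comp hH.tendsto_meridian_atBot
  tendsto_deriv_height := by
    rw [hH.deriv_fst_meridian]
    exact (continuous_fst.tendsto (0 : V5)).comp hH.tendsto_deriv_meridian
  tendsto_deriv_angular := by
    rw [hH.deriv_clm_meridian, ← map_zero (angular j)]
    exact ((angular j).continuous.tendsto 0).comp hH.tendsto_deriv_meridian

lemma exists_angular_ne_zero (hH : IsHarmonicSphere ω)
    (hnc : ∃ x ∈ sphere2, ∃ y ∈ sphere2, ω x ≠ ω y) :
    ∃ j, ∃ x ∈ sphere2, angular j (ω x) ≠ 0 := by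
  by_contra! hzero
  obtain ⟨x, hx, y, hy, hne⟩ := hnc
  have hconn : IsPreconnected sphere2 :=
    isPreconnected_sphere (Module.lt_rank_of_lt_finrank (by simp)) 0 1
  have hsq (z : E3) (hz : z ∈ sphere2) : (ω z).1 ^ 2 = 1 := by
    rw [← hH.1 z hz, nsq_eq_sum_angular]
    simp [hzero _ z hz]
  have hfst : (ω x).1 = (ω y).1 := by
    rcases hconn.eq_one_or_eq_neg_one_of_sq_eq (continuous_fst.comp_continuousOn hH.continuousOn)
      hsq with h | h
    · exact (h hx).trans (h hy).symm
    · exact (h hx).trans (h hy).symm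
  exact hne (V5_ext_angular hfst fun j => (hzero j x hx).trans (hzero j y hy).symm)

theorem exists_meridian_eq (hH : IsHarmonicSphere ω) (heq : EquivariantS ω)
    (hvanish : ∀ i ≠ j, ∀ x ∈ sphere2, angular i (ω x) = 0)
    (hnc : ∃ x ∈ sphere2, ∃ y ∈ sphere2, ω x ≠ ω y) :
    ∃ ε : ℝ, ε ^ 2 = 1 ∧ ∃ μ : ℂ, μ ≠ 0 ∧ ∀ t,
      meridian ω t = ε • equatorial j (stInv (μ * (Real.exp t : ℂ) ^ (j + 1 : ℕ))) := by
  obtain ⟨t₀, ht₀⟩ : ∃ t, angular j (meridian ω t) ≠ 0 := by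
    by_contra! hzero
    obtain ⟨i, x, hx, hne⟩ := hH.exists_angular_ne_zero hnc
    rcases eq_or_ne i j with rfl | hij
    · exact hne (angular_eq_zero_of_meridian heq hzero hx)
    · exact hne (hvanish i hij x hx)
  obtain ⟨ε, hε, μ, hμ, hsol⟩ :=
    (hH.isHarmonicMeridian heq hvanish).exists_eq_stInv (by positivity) ht₀
  refine ⟨ε, hε, μ, hμ, fun t => ?_⟩
  have hexp : (Real.exp t : ℂ) ^ (j + 1 : ℕ) = (Real.exp ((j + 1) * t) : ℝ) := by
    rw [← Complex.ofReal_pow, ← Real.exp_nat_mul]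
    push_cast
    rfl
  rw [hexp]
  refine V5_ext_angular ?_ fun i => ?_
  · rw [(hsol t).1, Prod.smul_fst, equatorial_fst, smul_eq_mul]
  · rw [map_smul]
    rcases eq_or_ne i j with rfl | hij
    · rw [(hsol t).2, angular_equatorial_self, Complex.real_smul]
    · rw [angular_equatorial_of_ne hij, smul_zero, meridian, hvanish i hij _ (stInv_mem_sphere2 _)]

lemma eq_smul_equatorial_of_meridian_eq (hH : IsHarmonicSphere ω) (heq : EquivariantS ω)
    {ε : ℝ} {μ : ℂ}
    (hmeridian : ∀ t,
      meridian ω t = ε • equatorial j (stInv (μ * (Real.exp t : ℂ) ^ (j + 1 : ℕ)))) (z : ℂ) :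
    ω (stInv z) = ε • equatorial j (stInv (μ * z ^ (j + 1 : ℕ))) := by
  have hcont : Continuous fun z => ε • equatorial j (stInv (μ * z ^ (j + 1 : ℕ))) :=
    ((continuous_equatorial j).comp
      ((contDiff_stInv (n := 0)).continuous.comp (by fun_prop))).const_smul ε
  refine congrFun (hH.contDiff_comp_stInv.continuous.ext_on (dense_compl_singleton 0) hcont
    fun z hz => ?_) z
  obtain ⟨t, α, rfl⟩ := exists_eq_exp_mul_exp hz
  have hexp : Complex.exp (Complex.I * α) ^ (j + 1 : ℕ) =
      Complex.exp (Complex.I * ((j + 1) * α : ℝ)) := by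
    rw [← Complex.exp_nat_mul]
    push_cast
    ring_nf
  dsimp only
  rw [← rot3_stInv, heq α _ (stInv_mem_sphere2 _)]
  change circAct α (meridian ω t) = _
  rw [hmeridian, circAct_smul, circAct_equatorial, rot3_stInv, mul_pow, hexp, mul_left_comm]

lemma apply_southPole_of_meridian_eq (hH : IsHarmonicSphere ω) {ε : ℝ} {μ : ℂ} (hμ : μ ≠ 0)
    (hmeridian : ∀ t,
      meridian ω t = ε • equatorial j (stInv (μ * (Real.exp t : ℂ) ^ (j + 1 : ℕ)))) :
    ω southPole = ε • equatorial j southPole := by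
  have hcobounded : Filter.Tendsto (fun t : ℝ => μ * (Real.exp t : ℂ) ^ (j + 1 : ℕ))
      Filter.atTop (Bornology.cobounded ℂ) := by
    rw [← tendsto_norm_atTop_iff_cobounded]
    simp only [norm_mul, norm_pow, Complex.norm_real, Real.norm_eq_abs, Real.abs_exp]
    exact ((Filter.tendsto_pow_atTop j.val.succ_ne_zero).comp
      Real.tendsto_exp_atTop).const_mul_atTop (norm_pos_iff.2 hμ)
  refine tendsto_nhds_unique hH.tendsto_meridian_atTop ?_
  rw [funext hmeridian]
  exact (((continuous_equatorial j).tendsto _).comp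
    (tendsto_stInv_cobounded.comp hcobounded)).const_smul ε

end IsHarmonicSphere

/-! ### Linear degeneracy -/

section Degenerate

lemma exists_circAct_eq {u : ℂ} (hu : ‖u‖ = 1) :
    ∃ α : ℝ, ∀ p : V5, circAct α p = (p.1, u * p.2.1, u ^ 2 * p.2.2) := by
  have hexp : Complex.exp (Complex.I * u.arg) = u := by
    simpa [hu, mul_comm] using Complex.norm_mul_exp_arg_mul_I u
  have hexp_two : Complex.exp (2 * Complex.I * u.arg) = u ^ 2 := by
    rw [mul_assoc, two_mul, Complex.exp_add, hexp, sq]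
  exact ⟨u.arg, fun p => by rw [circAct, hexp, hexp_two]⟩

variable {W : Submodule ℝ V5} {p : V5}

lemma unit_mul_mem_of_circAct_mem (hp : ∀ α, circAct α p ∈ W) {u : ℂ} (hu : ‖u‖ = 1) :
    ((p.1, u * p.2.1, u ^ 2 * p.2.2) : V5) ∈ W := by
  obtain ⟨α, hα⟩ := exists_circAct_eq hu
  exact hα p ▸ hp α

-- The weight-one coordinate is the part of the orbit that is odd in `u`.
lemma unit_mul_odd_mem_of_circAct_mem (hp : ∀ α, circAct α p ∈ W) {u : ℂ} (hu : ‖u‖ = 1) :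
    ((0, u * p.2.1, 0) : V5) ∈ W := by
  convert W.smul_mem (1 / 2 : ℝ) (W.sub_mem (unit_mul_mem_of_circAct_mem hp hu)
    (unit_mul_mem_of_circAct_mem hp (u := -u) (by rwa [norm_neg]))) using 1
  refine Prod.ext (by simp) (Prod.ext ?_ (by simp))
  simp only [Prod.mk_sub_mk, Prod.smul_mk, Complex.real_smul]
  push_cast
  ring

lemma unit_mul_even_mem_of_circAct_mem (hp : ∀ α, circAct α p ∈ W) {u : ℂ} (hu : ‖u‖ = 1) :
    ((p.1, 0, u * p.2.2) : V5) ∈ W := by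
  obtain ⟨v, rfl⟩ := IsAlgClosed.exists_pow_nat_eq u two_pos
  have hv : ‖v‖ = 1 := by
    rwa [norm_pow, pow_eq_one_iff_of_nonneg (norm_nonneg v) two_ne_zero] at hu
  convert W.sub_mem (unit_mul_mem_of_circAct_mem hp hv) (unit_mul_odd_mem_of_circAct_mem hp hv)
    using 1
  ext <;> simp

lemma fst_mem_of_circAct_mem (hp : ∀ α, circAct α p ∈ W) : ((p.1, 0, 0) : V5) ∈ W := by
  convert W.smul_mem (1 / 2 : ℝ) (W.add_mem
    (unit_mul_even_mem_of_circAct_mem hp (u := 1) (by simp))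
    (unit_mul_even_mem_of_circAct_mem hp (u := -1) (by simp))) using 1
  refine Prod.ext ?_ (by simp)
  simp only [Prod.mk_add_mk, Prod.smul_mk, smul_eq_mul]
  ring

lemma mul_odd_mem_of_circAct_mem (hp : ∀ α, circAct α p ∈ W) (c : ℂ) :
    ((0, c * p.2.1, 0) : V5) ∈ W := by
  convert W.smul_mem ‖c‖ (unit_mul_odd_mem_of_circAct_mem hp (Complex.norm_exp_ofReal_mul_I c.arg))
    using 1
  simp [← mul_assoc]

lemma mul_even_mem_of_circAct_mem (hp : ∀ α, circAct α p ∈ W) (c : ℂ) :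
    ((0, 0, c * p.2.2) : V5) ∈ W := by
  convert W.smul_mem ‖c‖ (W.sub_mem
    (unit_mul_even_mem_of_circAct_mem hp (Complex.norm_exp_ofReal_mul_I c.arg))
    (fst_mem_of_circAct_mem hp)) using 1
  simp [← mul_assoc]

lemma eq_top_of_circAct_mem {q r : V5} (hp : ∀ α, circAct α p ∈ W) (hq : ∀ α, circAct α q ∈ W)
    (hr : ∀ α, circAct α r ∈ W) (hp0 : p.1 ≠ 0) (hq0 : angular 0 q ≠ 0) (hr0 : angular 1 r ≠ 0) :
    W = ⊤ := by
  refine Submodule.eq_top_iff'.2 fun v => ?_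
  convert W.add_mem (W.smul_mem (v.1 / p.1) (fst_mem_of_circAct_mem hp))
    (W.add_mem (mul_odd_mem_of_circAct_mem hq (v.2.1 / angular 0 q))
      (mul_even_mem_of_circAct_mem hr (v.2.2 / angular 1 r))) using 1
  rw [angular_zero] at hq0 ⊢
  rw [angular_one] at hr0 ⊢
  ext <;> simp [hp0, hq0, hr0]

end Degenerate

namespace IsHarmonicSphere

variable {ω : E3 → V5} {j : Fin 2}

lemma fst_southPole_sq (hH : IsHarmonicSphere ω) (heq : EquivariantS ω) :
    (ω southPole).1 ^ 2 = 1 := by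
  rw [← hH.1 southPole southPole_mem_sphere2, nsq_eq_sum_angular]
  simp [angular_eq_zero_of_planar_eq_zero heq southPole_mem_sphere2 planar_southPole]

lemma exists_forall_ne_angular_eq_zero (hH : IsHarmonicSphere ω) (heq : EquivariantS ω)
    (hnf : Submodule.span ℝ (ω '' sphere2) ≠ ⊤) :
    ∃ j, ∀ i ≠ j, ∀ x ∈ sphere2, angular i (ω x) = 0 := by
  by_contra! hne
  obtain ⟨i, hi, x, hx, hx0⟩ := hne 1
  obtain rfl : i = 0 := by omega
  obtain ⟨i, hi, y, hy, hy1⟩ := hne 0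
  obtain rfl := Fin.eq_one_of_ne_zero i hi
  have horbit {z : E3} (hz : z ∈ sphere2) (α : ℝ) :
      circAct α (ω z) ∈ Submodule.span ℝ (ω '' sphere2) :=
    heq α z hz ▸ Submodule.subset_span (Set.mem_image_of_mem ω (rot3_mem_sphere2 α hz))
  have hpole : (ω southPole).1 ≠ 0 :=
    pow_ne_zero_iff two_ne_zero |>.1 (hH.fst_southPole_sq heq ▸ one_ne_zero)
  exact hnf (eq_top_of_circAct_mem (horbit southPole_mem_sphere2) (horbit hx) (horbit hy)
    hpole hx0 hy1)

theorem eq_equatorial_or_eq_neg_equatorial (hH : IsHarmonicSphere ω) (heq : EquivariantS ω)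
    (hvanish : ∀ i ≠ j, ∀ x ∈ sphere2, angular i (ω x) = 0)
    (hnc : ∃ x ∈ sphere2, ∃ y ∈ sphere2, ω x ≠ ω y) :
    ∃ μ : ℂ, μ ≠ 0 ∧
      ((ω southPole = (-1, 0, 0) ∧
          ∀ z, ω (stInv z) = equatorial j (stInv (μ * z ^ (j + 1 : ℕ)))) ∨
        (ω southPole = (1, 0, 0) ∧
          ∀ z, ω (stInv z) = -equatorial j (stInv (μ * z ^ (j + 1 : ℕ))))) := by
  obtain ⟨ε, hε, μ, hμ, hmeridian⟩ := hH.exists_meridian_eq heq hvanish hnc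
  have hpole := hH.apply_southPole_of_meridian_eq hμ hmeridian
  have hsphere := hH.eq_smul_equatorial_of_meridian_eq heq hmeridian
  rw [equatorial_southPole] at hpole
  refine ⟨μ, hμ, (sq_eq_one_iff.1 hε).imp ?_ ?_⟩ <;> rintro rfl
  · exact ⟨by simpa using hpole, by simpa using hsphere⟩
  · exact ⟨by simpa using hpole, by simpa using hsphere⟩

end IsHarmonicSphere

/-- Classification of linearly degenerate equivariant harmonic spheres: a nonconstant,
smooth, S¹-equivariant, non linearly full harmonic sphere ω is, up to sign determined
by ω(S⁽²⁾), either ω_eq^{(1)} ∘ σ₂⁻¹(μ₁ z) (with ω₂ ≡ 0) or ω_eq^{(2)} ∘ σ₂⁻¹(μ₂ z²)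
(with ω₁ ≡ 0), and exactly one of the two alternatives holds. -/
theorem statement5 (ω : E3 → V5)
    (hH : IsHarmonicSphere ω) (heq : EquivariantS ω)
    (hnc : ∃ x ∈ sphere2, ∃ y ∈ sphere2, ω x ≠ ω y)
    (hnf : Submodule.span ℝ (ω '' sphere2) ≠ ⊤) :
    Xor'
      ((∀ x ∈ sphere2, (ω x).2.2 = 0) ∧
        ∃ μ1 : ℂ, μ1 ≠ 0 ∧
          ((ω southPole = ((-1 : ℝ), 0, 0) ∧
              ∀ z : ℂ, ω (stInv z) = omegaEq1 (stInv (μ1 * z))) ∨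
            (ω southPole = ((1 : ℝ), 0, 0) ∧
              ∀ z : ℂ, ω (stInv z) = -omegaEq1 (stInv (μ1 * z)))))
      ((∀ x ∈ sphere2, (ω x).2.1 = 0) ∧
        ∃ μ2 : ℂ, μ2 ≠ 0 ∧
          ((ω southPole = ((-1 : ℝ), 0, 0) ∧
              ∀ z : ℂ, ω (stInv z) = omegaEq2 (stInv (μ2 * z ^ 2))) ∨
            (ω southPole = ((1 : ℝ), 0, 0) ∧
              ∀ z : ℂ, ω (stInv z) = -omegaEq2 (stInv (μ2 * z ^ 2))))) := by
  have hexclusive (hfst : ∀ x ∈ sphere2, (ω x).2.1 = 0) : ¬∀ x ∈ sphere2, (ω x).2.2 = 0 := by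
    obtain ⟨j, x, hx, hne⟩ := hH.exists_angular_ne_zero hnc
    fin_cases j
    · exact absurd (hfst x hx) hne
    · exact fun hsnd => hne (hsnd x hx)
  obtain ⟨j, hj⟩ := hH.exists_forall_ne_angular_eq_zero heq hnf
  have hclass := hH.eq_equatorial_or_eq_neg_equatorial heq hj hnc
  fin_cases j
  · have hsnd := hj 1 one_ne_zero
    simp only [Fin.zero_eta, zero_add, pow_one] at hclass
    exact Or.inl ⟨⟨hsnd, hclass⟩, fun h => hexclusive h.1 hsnd⟩
  · have hfst := hj 0 zero_ne_one
    exact Or.inr ⟨⟨hfst, hclass⟩, fun h => hexclusive hfst h.1⟩
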